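/- Let (G,f) be an admissible pair such that G is continuous on [0, D_m(f)), G(x) > 0 for all x > 0 in its domain, and f is strictly convex at 1 (i.e. for all x₁ < 1 < x₂ and λ ∈ (0,1) with λx₁ + (1−λ)x₂ = 1, one has λf(x₁) + (1−λ)f(x₂) > 0). If (G,f) is information-subadditive, then (G,f) is divergence-subadditive. -/

import Mathlib

open scoped BigOperators

/-- A probability mass function on a finite type: nonnegative and summing to 1. -/
def IsPMF {X : Type*} [Fintype X] (p : X → ℝ) : Prop :=
  (∀ x, 0 ≤ p x) ∧ ∑ x, p x = 1

/-- Absolute continuity `p ≪ q`: `q x = 0` implies `p x = 0`. -/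
def AbsCont {X : Type*} (p q : X → ℝ) : Prop :=
  ∀ x, q x = 0 → p x = 0

/-- The f-divergence `D_f(p‖q) = ∑_{x : q(x) > 0} q(x) f(p(x)/q(x))`. -/
noncomputable def fDiv {X : Type*} [Fintype X] (f : ℝ → ℝ) (p q : X → ℝ) : ℝ :=
  ∑ x, if 0 < q x then q x * f (p x / q x) else 0

/-- `D_m(f) = f 0 + lim_{t→∞} f t / t`, as an extended real.  For a convex `f`
with `f 1 = 0` the limit equals the supremum of the slopes `f t / (t-1)` over `t > 1`. -/
noncomputable def Dm (f : ℝ → ℝ) : EReal :=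
  (f 0 : EReal) + ⨆ t : {t : ℝ // 1 < t}, ((f t.1 / (t.1 - 1) : ℝ) : EReal)

/-- An admissible pair `(G, f)`: `f` is convex on `[0,∞)` with `f 1 = 0`, and
`G : [0, D_m(f)) → [0,∞)` is non-decreasing with `G 0 = 0`. -/
def Admissible (G f : ℝ → ℝ) : Prop :=
  ConvexOn ℝ (Set.Ici 0) f ∧ f 1 = 0 ∧ G 0 = 0 ∧
    (∀ a b : ℝ, 0 ≤ a → a ≤ b → (b : EReal) < Dm f → G a ≤ G b) ∧
    (∀ a : ℝ, 0 ≤ a → (a : EReal) < Dm f → 0 ≤ G a)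

/-- The `(G,f)`-information `I_{G,f}(p_X, p_{Y|X})`: the infimum over output pmfs
`q_Y` (with `p_{Y|X=x} ≪ q_Y` for all `x`) of `∑_x p_X x • G (D_f(p_{Y|X=x}‖q_Y))`. -/
noncomputable def Igf {X Y : Type*} [Fintype X] [Fintype Y]
    (G f : ℝ → ℝ) (pX : X → ℝ) (W : X → Y → ℝ) : ℝ :=
  sInf {v : ℝ | ∃ qY : Y → ℝ, IsPMF qY ∧ (∀ x, AbsCont (W x) qY) ∧
    v = ∑ x, pX x * G (fDiv f (W x) qY)}
/-- `(G,f)` is divergence-subadditive: for all finite alphabets and pmfs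
`q_Y ≪ r_Y`, `q_Z ≪ r_Z`, one has
`G(D_f(q_Y⊗q_Z‖r_Y⊗r_Z)) ≤ G(D_f(q_Y‖r_Y)) + G(D_f(q_Z‖r_Z))`. -/
def DivSubadditive (G f : ℝ → ℝ) : Prop :=
  ∀ (Y Z : Type) [Fintype Y] [Fintype Z] (qY rY : Y → ℝ) (qZ rZ : Z → ℝ),
    IsPMF qY → IsPMF rY → IsPMF qZ → IsPMF rZ →
    AbsCont qY rY → AbsCont qZ rZ →
    G (fDiv f (fun p : Y × Z => qY p.1 * qZ p.2) (fun p : Y × Z => rY p.1 * rZ p.2)) ≤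
      G (fDiv f qY rY) + G (fDiv f qZ rZ)

/-- `(G,f)` is information-subadditive: for every pmf `p_X` and channels
`p_{Y|X}`, `p_{Z|X}` (so that `Y → X → Z` is a Markov chain),
`I_{G,f}(X;YZ) ≤ I_{G,f}(X;Y) + I_{G,f}(X;Z)`. -/
def InfoSubadditive (G f : ℝ → ℝ) : Prop :=
  ∀ (X Y Z : Type) [Fintype X] [Fintype Y] [Fintype Z]
    (pX : X → ℝ) (W : X → Y → ℝ) (V : X → Z → ℝ),
    IsPMF pX → (∀ x, IsPMF (W x)) → (∀ x, IsPMF (V x)) →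
    Igf G f pX (fun x (p : Y × Z) => W x p.1 * V x p.2) ≤
      Igf G f pX W + Igf G f pX V

/-!
Feed a binary input with prior `(ε, 1 - ε)` into the channel whose two output laws are `q` and `r`.
Choosing the output law `r` shows that its `(G,f)`-information is at most `ε G(D_f(q‖r))`.
Conversely, a competing output law `s` which stays away from `r` pays, by strict convexity of `f`
at `1`, a cost of constant order for the likely letter, while one close to `r` pays nearly
`ε G(D_f(q‖r))` for the rare letter. So the information divided by `ε` tends to `G(D_f(q‖r))` as
`ε → 0`, and information-subadditivity for the product of two such channels becomes
divergence-subadditivity in the limit.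
-/

open Filter Topology Set

/-- Unlike a subgradient at `x`, the mean of the two secant slopes gives growth on both sides of `x`
even where `f` is affine on one side, at the price of the error `2 * τ`. -/
lemma add_slope_mul_abs_le_of_convexOn {f : ℝ → ℝ} {s : Set ℝ} (hf : ConvexOn ℝ s f) {x y τ : ℝ}
    (hτ : 0 < τ) (hx : x ∈ s) (hy : y ∈ s) (hl : x - τ ∈ s) (hr : x + τ ∈ s) :
    f x + (slope f x (x + τ) + slope f x (x - τ)) / 2 * (y - x)
      + (slope f x (x + τ) - slope f x (x - τ)) / 2 * (|y - x| - 2 * τ) ≤ f y := by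
  have hmono {a b : ℝ} (ha : a ∈ s) (hax : a ≠ x) (hb : b ∈ s) (hbx : b ≠ x) (hab : a ≤ b) :
      slope f x a ≤ slope f x b := hf.slope_mono hx ⟨ha, hax⟩ ⟨hb, hbx⟩ hab
  have hl_ne : x - τ ≠ x := (sub_lt_self x hτ).ne
  have hr_ne : x + τ ≠ x := (lt_add_of_pos_right x hτ).ne'
  have hlr : slope f x (x - τ) ≤ slope f x (x + τ) := hmono hl hl_ne hr hr_ne (by linarith)
  have hfy : f y = f x + (y - x) * slope f x y := by
    have := sub_smul_slope f x y
    rw [smul_eq_mul, vsub_eq_sub] at this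
    linarith
  set α := slope f x (x - τ)
  set β := slope f x (x + τ)
  -- Beyond distance `τ` the secant slope on the side of `y` bounds `slope f x y`; within distance
  -- `τ` only the opposite one does, and the slack `2 * τ` makes up for the difference.
  rcases lt_trichotomy y x with hyx | rfl | hxy
  · rw [abs_of_neg (by linarith), hfy]
    rcases le_or_gt y (x - τ) with hy_far | hy_near
    · have hslope : slope f x y ≤ α := hmono hy hyx.ne hl hl_ne hy_far
      nlinarith
    · have hslope : slope f x y ≤ β := hmono hy hyx.ne hr hr_ne (by linarith)
      nlinarith
  · rw [sub_self, abs_zero]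
    nlinarith
  · rw [abs_of_pos (by linarith), hfy]
    rcases le_or_gt (x + τ) y with hy_far | hy_near
    · have hslope : β ≤ slope f x y := hmono hr hr_ne hy hxy.ne' hy_far
      nlinarith
    · have hslope : α ≤ slope f x y := hmono hl hl_ne hy hxy.ne' (by linarith)
      nlinarith

/-- Strict convexity of `f` at the point `1`, for a generator normalized by `f 1 = 0`: every chord
of `f` passing over `1` is positive there. -/
def StrictConvexAtOne (f : ℝ → ℝ) : Prop :=
  ∀ x₁ x₂ lam : ℝ, 0 ≤ x₁ → x₁ < 1 → 1 < x₂ → 0 < lam → lam < 1 →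
    lam * x₁ + (1 - lam) * x₂ = 1 → 0 < lam * f x₁ + (1 - lam) * f x₂

/-- The interval `[0, D_m(f))` on which the function `G` of an admissible pair is prescribed. -/
def divDomain (f : ℝ → ℝ) : Set ℝ :=
  {x : ℝ | 0 ≤ x ∧ (x : EReal) < Dm f}

lemma StrictConvexAtOne.slope_lt_slope {f : ℝ → ℝ} (hstrict : StrictConvexAtOne f) (h1 : f 1 = 0)
    {a b : ℝ} (ha : 0 ≤ a) (ha1 : a < 1) (hb1 : 1 < b) : slope f 1 a < slope f 1 b := by
  have hab : 0 < b - a := by linarith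
  have hchord := hstrict a b ((b - 1) / (b - a)) ha ha1 hb1 (div_pos (by linarith) hab)
    ((div_lt_one hab).2 (by linarith)) (by field)
  have hweights : (b - a) * ((b - 1) / (b - a) * f a + (1 - (b - 1) / (b - a)) * f b)
      = (b - 1) * f a + (1 - a) * f b := by field
  rw [slope_def_field, slope_def_field, h1, sub_zero, sub_zero, ← neg_div_neg_eq, neg_sub,
    div_lt_div_iff₀ (by linarith) (by linarith)]
  linarith [mul_pos hab hchord]

lemma coe_add_div_le_Dm (f : ℝ → ℝ) {t : ℝ} (ht : 1 < t) :
    ((f 0 + f t / (t - 1) : ℝ) : EReal) ≤ Dm f := by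
  rw [Dm, EReal.coe_add]
  gcongr
  exact le_iSup (fun t : {t : ℝ // 1 < t} => ((f t.1 / (t.1 - 1) : ℝ) : EReal)) ⟨t, ht⟩

section Distributions

variable {X Y Z : Type*}

lemma AbsCont.refl (p : X → ℝ) : AbsCont p p := fun _ => id

lemma AbsCont.mul_div_cancel {p q : X → ℝ} (h : AbsCont p q) (x : X) :
    q x * (p x / q x) = p x :=
  mul_div_cancel_of_imp' (h x)

lemma AbsCont.prod {p q : Y → ℝ} {p' q' : Z → ℝ} (h : AbsCont p q) (h' : AbsCont p' q') :
    AbsCont (fun a : Y × Z => p a.1 * p' a.2) (fun a : Y × Z => q a.1 * q' a.2) := by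
  intro a ha
  rcases mul_eq_zero.1 ha with h0 | h0
  · exact mul_eq_zero_of_left (h _ h0) _
  · exact mul_eq_zero_of_right _ (h' _ h0)

lemma IsPMF.prod [Fintype Y] [Fintype Z] {p : Y → ℝ} {q : Z → ℝ} (hp : IsPMF p) (hq : IsPMF q) :
    IsPMF (fun a : Y × Z => p a.1 * q a.2) := by
  refine ⟨fun a => mul_nonneg (hp.1 _) (hq.1 _), ?_⟩
  rw [Fintype.sum_prod_type, ← Fintype.sum_mul_sum, hp.2, hq.2, one_mul]

lemma AbsCont.exists_le_mul [Finite X] {p q : X → ℝ} (h : AbsCont p q) (hq : ∀ x, 0 ≤ q x) :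
    ∃ t, 1 < t ∧ ∀ x, p x ≤ t * q x := by
  obtain ⟨M, hM⟩ := Finite.exists_le fun x => p x / q x
  refine ⟨max M 2, lt_max_of_lt_right one_lt_two, fun x => ?_⟩
  rw [← h.mul_div_cancel x, mul_comm]
  exact mul_le_mul_of_nonneg_right ((hM x).trans (le_max_left _ _)) (hq x)

end Distributions

section Divergence

variable {X : Type*} [Fintype X] {f : ℝ → ℝ} {p q r s : X → ℝ}

lemma fDiv_eq_sum (hq : ∀ x, 0 ≤ q x) : fDiv f p q = ∑ x, q x * f (p x / q x) := by
  refine Finset.sum_congr rfl fun x _ => ?_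
  split_ifs with hx
  · rfl
  · rw [le_antisymm (not_lt.1 hx) (hq x), zero_mul]

lemma fDiv_self (hq : IsPMF q) : fDiv f q q = f 1 := by
  have pointwise (x : X) : q x * f (q x / q x) = q x * f 1 := by
    rcases eq_or_ne (q x) 0 with hx | hx
    · rw [hx, zero_mul, zero_mul]
    · rw [div_self hx]
  simp only [fDiv_eq_sum hq.1, pointwise, ← Finset.sum_mul, hq.2, one_mul]

lemma map_one_le_fDiv (hf : ConvexOn ℝ (Ici 0) f) (hp : IsPMF p) (hq : IsPMF q)
    (hpq : AbsCont p q) : f 1 ≤ fDiv f p q := by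
  have jensen := hf.map_sum_le (t := Finset.univ) (w := q) (p := fun x => p x / q x)
    (fun x _ => hq.1 x) hq.2 (fun x _ => div_nonneg (hp.1 x) (hq.1 x))
  simpa only [smul_eq_mul, hpq.mul_div_cancel, hp.2, ← fDiv_eq_sum hq.1] using jensen

lemma fDiv_le_of_le_mul (hf : ConvexOn ℝ (Ici 0) f) (hp : IsPMF p) (hq : IsPMF q) {t : ℝ}
    (ht : 0 < t) (hpq : ∀ x, p x ≤ t * q x) :
    fDiv f p q ≤ (1 - 1 / t) * f 0 + 1 / t * f t := by
  have chord (x : X) : q x * f (p x / q x) ≤ q x * f 0 + p x * ((f t - f 0) / t) := by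
    rcases (hq.1 x).eq_or_lt with hx | hx
    · have hpx : p x = 0 := le_antisymm (by simpa [← hx] using hpq x) (hp.1 x)
      simp [← hx, hpx]
    have hu : p x / q x / t ≤ 1 := by
      rw [div_div, div_le_one (mul_pos hx ht), mul_comm]
      exact hpq x
    have hconv := hf.2 (mem_Ici.2 le_rfl) (mem_Ici.2 ht.le) (sub_nonneg.2 hu)
      (div_nonneg (div_nonneg (hp.1 x) hx.le) ht.le) (sub_add_cancel _ _)
    simp only [smul_eq_mul, mul_zero, zero_add, div_mul_cancel₀ _ ht.ne'] at hconv
    calc q x * f (p x / q x)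
        ≤ q x * ((1 - p x / q x / t) * f 0 + p x / q x / t * f t) := by gcongr
      _ = q x * f 0 + p x * ((f t - f 0) / t) := by field
  calc fDiv f p q = ∑ x, q x * f (p x / q x) := fDiv_eq_sum hq.1
    _ ≤ ∑ x, (q x * f 0 + p x * ((f t - f 0) / t)) := Finset.sum_le_sum fun x _ => chord x
    _ = f 0 + (f t - f 0) / t := by
      rw [Finset.sum_add_distrib, ← Finset.sum_mul, ← Finset.sum_mul, hp.2, hq.2, one_mul, one_mul]
    _ = (1 - 1 / t) * f 0 + 1 / t * f t := by ring

lemma fDiv_lt_Dm (hf : ConvexOn ℝ (Ici 0) f) (h1 : f 1 = 0) (hstrict : StrictConvexAtOne f)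
    (hp : IsPMF p) (hq : IsPMF q) (hpq : AbsCont p q) : (fDiv f p q : EReal) < Dm f := by
  obtain ⟨t, ht, hpt⟩ := hpq.exists_le_mul hq.1
  have ht0 : 0 < t := one_pos.trans ht
  have ht1 : 0 < t - 1 := sub_pos.2 ht
  have hpos : 0 < f 0 + f t / (t - 1) := by
    have hslope := hstrict.slope_lt_slope h1 le_rfl one_pos ht
    simp only [slope_def_field, h1, sub_zero, zero_sub, div_neg, div_one] at hslope
    linarith
  refine (EReal.coe_lt_coe_iff.2 ?_).trans_le (coe_add_div_le_Dm f ht)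
  calc fDiv f p q ≤ (1 - 1 / t) * f 0 + 1 / t * f t := fDiv_le_of_le_mul hf hp hq ht0 hpt
    _ = (1 - 1 / t) * (f 0 + f t / (t - 1)) := by field
    _ < f 0 + f t / (t - 1) := mul_lt_of_lt_one_left hpos (sub_lt_self _ (by positivity))

lemma fDiv_mem_divDomain (hf : ConvexOn ℝ (Ici 0) f) (h1 : f 1 = 0)
    (hstrict : StrictConvexAtOne f) (hp : IsPMF p) (hq : IsPMF q) (hpq : AbsCont p q) :
    fDiv f p q ∈ divDomain f :=
  ⟨h1 ▸ map_one_le_fDiv hf hp hq hpq, fDiv_lt_Dm hf h1 hstrict hp hq hpq⟩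

lemma add_slope_mul_sum_abs_le_fDiv (hf : ConvexOn ℝ (Ici 0) f) (hr : IsPMF r) (hs : IsPMF s)
    (hrs : AbsCont r s) {τ : ℝ} (hτ : 0 < τ) (hτ1 : τ ≤ 1) :
    f 1 + (slope f 1 (1 + τ) - slope f 1 (1 - τ)) / 2 * (∑ x, |r x - s x| - 2 * τ)
      ≤ fDiv f r s := by
  set c := (slope f 1 (1 + τ) + slope f 1 (1 - τ)) / 2
  set κ := (slope f 1 (1 + τ) - slope f 1 (1 - τ)) / 2
  have pointwise (x : X) : s x * f 1 + c * (r x - s x) + κ * (|r x - s x| - 2 * τ * s x)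
      ≤ s x * f (r x / s x) := by
    have hsub : s x * (r x / s x - 1) = r x - s x := by rw [mul_sub, hrs.mul_div_cancel, mul_one]
    have habs : s x * |r x / s x - 1| = |r x - s x| := by
      rw [← hsub, abs_mul, abs_of_nonneg (hs.1 x)]
    calc s x * f 1 + c * (r x - s x) + κ * (|r x - s x| - 2 * τ * s x)
        = s x * (f 1 + c * (r x / s x - 1) + κ * (|r x / s x - 1| - 2 * τ)) := by
          rw [← habs, ← hsub]; ring
      _ ≤ s x * f (r x / s x) := mul_le_mul_of_nonneg_left
          (add_slope_mul_abs_le_of_convexOn hf hτ (mem_Ici.2 zero_le_one)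
            (mem_Ici.2 (div_nonneg (hr.1 x) (hs.1 x))) (mem_Ici.2 (by linarith))
            (mem_Ici.2 (by linarith))) (hs.1 x)
  calc f 1 + κ * (∑ x, |r x - s x| - 2 * τ)
      = ∑ x, (s x * f 1 + c * (r x - s x) + κ * (|r x - s x| - 2 * τ * s x)) := by
        simp only [Finset.sum_add_distrib, Finset.sum_sub_distrib, ← Finset.mul_sum,
          ← Finset.sum_mul, hr.2, hs.2]
        ring
    _ ≤ ∑ x, s x * f (r x / s x) := Finset.sum_le_sum fun x _ => pointwise x
    _ = fDiv f r s := (fDiv_eq_sum hs.1).symm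

lemma exists_pos_le_fDiv_of_le_dist (hf : ConvexOn ℝ (Ici 0) f) (h1 : f 1 = 0)
    (hstrict : StrictConvexAtOne f) {δ : ℝ} (hδ : 0 < δ) :
    ∃ η > 0, ∀ r s : X → ℝ, IsPMF r → IsPMF s → AbsCont r s → δ ≤ dist r s → η ≤ fDiv f r s := by
  obtain ⟨τ, hτ, hτlt⟩ := exists_between (lt_min (half_pos hδ) one_pos)
  obtain ⟨hτδ, hτ1⟩ := lt_min_iff.1 hτlt
  have hκ : 0 < (slope f 1 (1 + τ) - slope f 1 (1 - τ)) / 2 :=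
    half_pos (sub_pos.2 (hstrict.slope_lt_slope h1 (by linarith) (by linarith) (by linarith)))
  refine ⟨_, mul_pos hκ (show 0 < δ - 2 * τ by linarith), fun r s hr hs hrs hd => ?_⟩
  have hl1 : δ ≤ ∑ x, |r x - s x| := by
    refine hd.trans ((dist_pi_le_iff (Finset.sum_nonneg fun _ _ => abs_nonneg _)).2 fun x => ?_)
    exact Finset.single_le_sum (f := fun x => |r x - s x|) (fun _ _ => abs_nonneg _)
      (Finset.mem_univ x)
  refine le_trans ?_ (add_slope_mul_sum_abs_le_fDiv hf hr hs hrs hτ hτ1.le)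
  rw [h1, zero_add]
  gcongr

lemma continuousWithinAt_fDiv (hf : ConvexOn ℝ (Ici 0) f) (hq : ∀ x, 0 ≤ q x) (hr : ∀ x, 0 ≤ r x)
    (hqr : AbsCont q r) : ContinuousWithinAt (fDiv f q) {s | ∀ x, 0 ≤ s x} r := by
  suffices ContinuousAt (fun s : X → ℝ => ∑ x, s x * f (q x / s x)) r from
    this.continuousWithinAt.congr (fun s hs => fDiv_eq_sum hs) (fDiv_eq_sum hr)
  refine tendsto_finsetSum _ fun x _ => ?_
  have heval : ContinuousAt (fun s : X → ℝ => s x) r := (continuous_apply x).continuousAt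
  rcases (hq x).eq_or_lt with hqx | hqx
  · simp only [← hqx, zero_div]
    exact heval.mul continuousAt_const
  · have hrx : r x ≠ 0 := fun h0 => hqx.ne' (hqr x h0)
    have hratio : 0 < q x / r x := div_pos hqx ((hr x).lt_of_ne' hrx)
    have hfcont : ContinuousAt f (q x / r x) :=
      hf.continuousOn_interior.continuousAt (by rw [interior_Ici]; exact Ioi_mem_nhds hratio)
    exact heval.mul (hfcont.comp (f := fun s : X → ℝ => q x / s x)
      (continuousAt_const.div heval hrx))

end Divergence

section GDivergence

variable {G f : ℝ → ℝ} {X : Type*} [Fintype X] {q r : X → ℝ}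

lemma Admissible.exists_pos_le_of_le (hGf : Admissible G f)
    (hGpos : ∀ x : ℝ, 0 < x → (x : EReal) < Dm f → 0 < G x) {η : ℝ} (hη : 0 < η) :
    ∃ g > 0, ∀ x ∈ divDomain f, η ≤ x → g ≤ G x := by
  obtain ⟨-, -, -, hmono, -⟩ := hGf
  by_cases hηD : (η : EReal) < Dm f
  · exact ⟨G η, hGpos η hη hηD, fun x hx hηx => hmono η x hη.le hηx hx.2⟩
  · exact ⟨1, one_pos, fun x hx hηx =>
      absurd ((EReal.coe_le_coe_iff.2 hηx).trans_lt hx.2) hηD⟩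

lemma Admissible.map_fDiv_nonneg (hGf : Admissible G f) (hstrict : StrictConvexAtOne f)
    (hq : IsPMF q) (hr : IsPMF r) (hqr : AbsCont q r) : 0 ≤ G (fDiv f q r) := by
  obtain ⟨hf, h1, -, -, hGnonneg⟩ := hGf
  obtain ⟨hnonneg, hlt⟩ := fDiv_mem_divDomain hf h1 hstrict hq hr hqr
  exact hGnonneg _ hnonneg hlt

lemma Admissible.exists_pos_le_map_fDiv_of_le_dist (hGf : Admissible G f)
    (hGpos : ∀ x : ℝ, 0 < x → (x : EReal) < Dm f → 0 < G x) (hstrict : StrictConvexAtOne f)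
    {δ : ℝ} (hδ : 0 < δ) :
    ∃ g > 0, ∀ r s : X → ℝ, IsPMF r → IsPMF s → AbsCont r s → δ ≤ dist r s →
      g ≤ G (fDiv f r s) := by
  obtain ⟨η, hη, hfar⟩ := exists_pos_le_fDiv_of_le_dist (X := X) hGf.1 hGf.2.1 hstrict hδ
  obtain ⟨g, hg, hG⟩ := hGf.exists_pos_le_of_le hGpos hη
  exact ⟨g, hg, fun r s hr hs hrs hd =>
    hG _ (fDiv_mem_divDomain hGf.1 hGf.2.1 hstrict hr hs hrs) (hfar r s hr hs hrs hd)⟩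

lemma lowerSemicontinuousWithinAt_map_fDiv (hf : ConvexOn ℝ (Ici 0) f) (h1 : f 1 = 0)
    (hGlsc : LowerSemicontinuousOn G (divDomain f)) (hstrict : StrictConvexAtOne f)
    (hq : IsPMF q) (hr : IsPMF r) (hqr : AbsCont q r) :
    LowerSemicontinuousWithinAt (fun s => G (fDiv f q s)) {s | IsPMF s ∧ AbsCont q s} r :=
  (hGlsc _ (fDiv_mem_divDomain hf h1 hstrict hq hr hqr)).comp
    ((continuousWithinAt_fDiv hf hq.1 hr.1 hqr).mono fun _ hs => hs.1.1)
    fun _ hs => fDiv_mem_divDomain hf h1 hstrict hq hs.1 hs.2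

end GDivergence

/-- The `(G,f)`-information of a binary input which takes the value `true` with probability `ε`,
through the channel with output law `q` on input `true` and `r` on input `false`. -/
noncomputable def binaryInfo {Y : Type*} [Fintype Y] (G f : ℝ → ℝ) (ε : ℝ) (q r : Y → ℝ) : ℝ :=
  Igf G f (fun b => cond b ε (1 - ε)) (fun b => cond b q r)

section BinaryInformation

variable {G f : ℝ → ℝ} {Y : Type*} [Fintype Y] {q r : Y → ℝ} {ε : ℝ}

lemma le_binaryInfo (hr : IsPMF r) (hqr : AbsCont q r) {c : ℝ}
    (hc : ∀ s, IsPMF s → AbsCont q s → AbsCont r s →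
      c ≤ ε * G (fDiv f q s) + (1 - ε) * G (fDiv f r s)) :
    c ≤ binaryInfo G f ε q r := by
  refine le_csInf ⟨_, r, hr, Bool.forall_bool.2 ⟨AbsCont.refl r, hqr⟩, rfl⟩ ?_
  rintro _ ⟨s, hs, hac, rfl⟩
  simpa only [Fintype.sum_bool, cond_true, cond_false] using hc s hs (hac true) (hac false)

lemma binaryInfo_le (hGf : Admissible G f) (hstrict : StrictConvexAtOne f) (hq : IsPMF q)
    (hr : IsPMF r) (hqr : AbsCont q r) (hε : 0 ≤ ε) (hε1 : ε ≤ 1) :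
    binaryInfo G f ε q r ≤ ε * G (fDiv f q r) := by
  refine csInf_le ⟨0, ?_⟩ ⟨r, hr, Bool.forall_bool.2 ⟨AbsCont.refl r, hqr⟩, ?_⟩
  · rintro _ ⟨s, hs, hac, rfl⟩
    rw [Fintype.sum_bool]
    exact add_nonneg (mul_nonneg hε (hGf.map_fDiv_nonneg hstrict hq hs (hac true)))
      (mul_nonneg (sub_nonneg.2 hε1) (hGf.map_fDiv_nonneg hstrict hr hs (hac false)))
  · simp [fDiv_self hr, hGf.2.1, hGf.2.2.1]

lemma eventually_mul_le_binaryInfo (hGf : Admissible G f)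
    (hGlsc : LowerSemicontinuousOn G (divDomain f))
    (hGpos : ∀ x : ℝ, 0 < x → (x : EReal) < Dm f → 0 < G x) (hstrict : StrictConvexAtOne f)
    (hq : IsPMF q) (hr : IsPMF r) (hqr : AbsCont q r) {B : ℝ} (hB : B < G (fDiv f q r)) :
    ∀ᶠ ε in 𝓝[>] 0, ε * B ≤ binaryInfo G f ε q r := by
  obtain ⟨δ, hδ, hnear⟩ := Metric.mem_nhdsWithin_iff.1
    (lowerSemicontinuousWithinAt_map_fDiv hGf.1 hGf.2.1 hGlsc hstrict hq hr hqr B hB)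
  obtain ⟨g, hg, hfar⟩ := hGf.exists_pos_le_map_fDiv_of_le_dist (X := Y) hGpos hstrict hδ
  have hsmall : ∀ᶠ ε in 𝓝[>] (0 : ℝ), ε * B < (1 - ε) * g :=
    (ContinuousAt.eventually_lt (by fun_prop) (by fun_prop) (by simpa using hg)).filter_mono
      nhdsWithin_le_nhds
  filter_upwards [hsmall, Ioo_mem_nhdsGT one_pos] with ε hεg ⟨hε, hε1⟩
  refine le_binaryInfo hr hqr fun s hs hqs hrs => ?_
  have hq_nonneg := mul_nonneg hε.le (hGf.map_fDiv_nonneg hstrict hq hs hqs)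
  have hr_nonneg := mul_nonneg (sub_nonneg.2 hε1.le) (hGf.map_fDiv_nonneg hstrict hr hs hrs)
  rcases lt_or_ge (dist s r) δ with hd | hd
  · have hBs : B < G (fDiv f q s) := hnear ⟨hd, hs, hqs⟩
    linarith [mul_le_mul_of_nonneg_left hBs.le hε.le]
  · have hgs : g ≤ G (fDiv f r s) := hfar r s hr hs hrs (dist_comm s r ▸ hd)
    linarith [mul_le_mul_of_nonneg_left hgs (sub_nonneg.2 hε1.le)]

theorem tendsto_binaryInfo_div (hGf : Admissible G f)
    (hGlsc : LowerSemicontinuousOn G (divDomain f))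
    (hGpos : ∀ x : ℝ, 0 < x → (x : EReal) < Dm f → 0 < G x) (hstrict : StrictConvexAtOne f)
    (hq : IsPMF q) (hr : IsPMF r) (hqr : AbsCont q r) :
    Tendsto (fun ε => binaryInfo G f ε q r / ε) (𝓝[>] 0) (𝓝 (G (fDiv f q r))) := by
  refine tendsto_order.2 ⟨fun a ha => ?_, fun b hb => ?_⟩
  · obtain ⟨B, haB, hB⟩ := exists_between ha
    filter_upwards [eventually_mul_le_binaryInfo hGf hGlsc hGpos hstrict hq hr hqr hB,
      self_mem_nhdsWithin] with ε hlow hε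
    exact haB.trans_le ((le_div_iff₀' hε).2 hlow)
  · filter_upwards [Ioo_mem_nhdsGT one_pos] with ε ⟨hε, hε1⟩
    exact ((div_le_iff₀' hε).2 (binaryInfo_le hGf hstrict hq hr hqr hε.le hε1.le)).trans_lt hb

end BinaryInformation

lemma InfoSubadditive.binaryInfo_prod_le {G f : ℝ → ℝ} (h : InfoSubadditive G f) {Y Z : Type}
    [Fintype Y] [Fintype Z] {qY rY : Y → ℝ} {qZ rZ : Z → ℝ} (hqY : IsPMF qY) (hrY : IsPMF rY)
    (hqZ : IsPMF qZ) (hrZ : IsPMF rZ) {ε : ℝ} (hε : 0 ≤ ε) (hε1 : ε ≤ 1) :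
    binaryInfo G f ε (fun a : Y × Z => qY a.1 * qZ a.2) (fun a => rY a.1 * rZ a.2)
      ≤ binaryInfo G f ε qY rY + binaryInfo G f ε qZ rZ := by
  have hprior : IsPMF fun b => cond b ε (1 - ε) :=
    ⟨Bool.forall_bool.2 ⟨sub_nonneg.2 hε1, hε⟩, by simp⟩
  have hchannel : (fun b => cond b (fun a : Y × Z => qY a.1 * qZ a.2) fun a => rY a.1 * rZ a.2)
      = fun b a => cond b qY rY a.1 * cond b qZ rZ a.2 := by
    funext b
    cases b <;> rfl
  rw [binaryInfo, hchannel]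
  exact h Bool Y Z _ _ _ hprior (Bool.forall_bool.2 ⟨hrY, hqY⟩) (Bool.forall_bool.2 ⟨hrZ, hqZ⟩)

theorem infoSubadditive_implies_divSubadditive_general (G f : ℝ → ℝ) (hGf : Admissible G f)
    (hGlsc : LowerSemicontinuousOn G (divDomain f))
    (hGpos : ∀ x : ℝ, 0 < x → (x : EReal) < Dm f → 0 < G x) (hstrict : StrictConvexAtOne f)
    (h : InfoSubadditive G f) :
    DivSubadditive G f := by
  intro Y Z _ _ qY rY qZ rZ hqY hrY hqZ hrZ hY hZ
  have hlimY := tendsto_binaryInfo_div hGf hGlsc hGpos hstrict hqY hrY hY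
  have hlimZ := tendsto_binaryInfo_div hGf hGlsc hGpos hstrict hqZ hrZ hZ
  have hlimYZ := tendsto_binaryInfo_div hGf hGlsc hGpos hstrict (hqY.prod hqZ) (hrY.prod hrZ)
    (hY.prod hZ)
  refine le_of_tendsto_of_tendsto hlimYZ (hlimY.add hlimZ) ?_
  filter_upwards [Ioo_mem_nhdsGT one_pos] with ε ⟨hε, hε1⟩
  rw [← add_div]
  gcongr
  exact h.binaryInfo_prod_le hqY hrY hqZ hrZ hε.le hε1.le

/-- Converse direction: if `(G,f)` is an admissible pair with `G` continuous and
positive on the interior of its domain `[0, D_m(f))`, and `f` is strictly convex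
at `1`, then information-subadditivity implies divergence-subadditivity. -/
theorem infoSubadditive_implies_divSubadditive (G f : ℝ → ℝ)
    (hGf : Admissible G f)
    (hGcont : ContinuousOn G {x : ℝ | 0 ≤ x ∧ (x : EReal) < Dm f})
    (hGpos : ∀ x : ℝ, 0 < x → (x : EReal) < Dm f → 0 < G x)
    (hstrict : ∀ x₁ x₂ lam : ℝ, 0 ≤ x₁ → x₁ < 1 → 1 < x₂ → 0 < lam → lam < 1 →
      lam * x₁ + (1 - lam) * x₂ = 1 → 0 < lam * f x₁ + (1 - lam) * f x₂)
    (h : InfoSubadditive G f) :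
    DivSubadditive G f :=
  infoSubadditive_implies_divSubadditive_general G f hGf hGcont.lowerSemicontinuousOn
    hGpos hstrict h
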